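/- Let f : ℝ² → ℝ be of class C² satisfying (i) D²f(p)(q,q) > 0 for all p, q ∈ ℝ² with q ≠ 0, and (ii) there is a constant λ > 0 with D²f(p)(q,q) ≤ λ · (ln(2+|p|)/(1+|p|)) · |q|² for all p, q ∈ ℝ². Let u ∈ C²(ℝ²) be an entire solution of the equation div[Df(∇u)] = 0 on ℝ². If there exist constants 0 ≤ m < 1 and K > 0 such that |∂₂u(x)| ≤ K(|∂₁u(x)|^m + 1) for all x ∈ ℝ², then u is an affine function, i.e. there exist a, b, c ∈ ℝ with u(x₁,x₂) = a x₁ + b x₂ + c. -/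

import Mathlib

open Real MeasureTheory Metric
open scoped ENNReal

noncomputable section

/-- `ℝ²` with its Euclidean structure. -/
abbrev E2 : Type := EuclideanSpace ℝ (Fin 2)

/-- The `i`-th standard basis vector of `ℝ²`. -/
def ee (i : Fin 2) : E2 := EuclideanSpace.single i 1

/-- The Hessian bilinear form `D²f(p)(q,q)`. -/
def Hess (f : E2 → ℝ) (p q : E2) : ℝ := iteratedFDeriv ℝ 2 f p ![q, q]

/-- The partial derivative `∂ᵢu(x)`. -/
def pd (u : E2 → ℝ) (i : Fin 2) (x : E2) : ℝ := fderiv ℝ u x (ee i)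

/-- The equation `div [Df(∇u)] = 0`, i.e. `∑ i, ∂ᵢ[(∂f/∂pᵢ)(∇u(x))] = 0` on `ℝ²`. -/
def solves (f u : E2 → ℝ) : Prop :=
  ∀ x : E2, ∑ i : Fin 2, fderiv ℝ (fun y => fderiv ℝ f (gradient u y) (ee i)) x (ee i) = 0

/-!
Each partial derivative `w = ∂ᵢu` is a weak solution of the linearized equation
`div (D²f(∇u) ∇w) = 0`. The growth hypotheses combine into `D²f(∇u)(q,q) ≤ ω(∂₂u) |q|²` with
`ω` integrable on `ℝ`. For `w = ∂₂u`, testing the linearized equation with `η² g(w)`, where `g` is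
the bounded primitive of `ω`, yields the Caccioppoli inequality
`∫ η² e ≤ C ∫ |η| √e |∇η|` for the energy density `e = ω(w) D²f(∇u)(∇w,∇w)`, and the quadratic
volume growth of the plane forces `e = 0`. Hence `∇∂₂u = 0`, and the equation together with the
positivity of `D²f` gives `∇∂₁u = 0`.
-/

section Jacobian

open scoped Convolution

variable {E : Type*} [NormedAddCommGroup E] [NormedSpace ℝ E] [FiniteDimensional ℝ E]
  [MeasurableSpace E] [BorelSpace E] {μ : Measure E} [μ.IsAddHaarMeasure]

theorem fderiv_convolution_mul_right {a b : E → ℝ} (ha : Continuous a) (hb : ContDiff ℝ 1 b)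
    (hbc : HasCompactSupport b) (x v : E) :
    fderiv ℝ (a ⋆[.mul ℝ ℝ, μ] b) x v = (a ⋆[.mul ℝ ℝ, μ] fun y => fderiv ℝ b y v) x := by
  rw [(hbc.hasFDerivAt_convolution_right _ ha.locallyIntegrable hb x).fderiv,
    convolution_precompR_apply _ ha.locallyIntegrable (hbc.fderiv ℝ)
      (hb.continuous_fderiv one_ne_zero)]

theorem convolution_mul_comm (a b : E → ℝ) :
    a ⋆[.mul ℝ ℝ, μ] b = b ⋆[.mul ℝ ℝ, μ] a := by
  rw [← convolution_flip, ContinuousLinearMap.flip_mul]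

theorem integral_fderiv_mul_fderiv_comm_of_hasCompactSupport {a b : E → ℝ}
    (ha : ContDiff ℝ 1 a) (hac : HasCompactSupport a) (hb : ContDiff ℝ 1 b)
    (hbc : HasCompactSupport b) (v w : E) :
    ∫ x, fderiv ℝ a x v * fderiv ℝ b x w ∂μ = ∫ x, fderiv ℝ a x w * fderiv ℝ b x v ∂μ := by
  have cont_fderiv {c : E → ℝ} (hc : ContDiff ℝ 1 c) (v : E) :
      Continuous fun x => fderiv ℝ c x v :=
    (hc.continuous_fderiv one_ne_zero).clm_apply continuous_const
  -- With `aNeg` the reflection of `a`, the integrals are the values at `0` of `-(∂_w b ⋆ ∂_v aNeg)`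
  -- and `-(∂_v b ⋆ ∂_w aNeg)`, and derivatives move freely between the factors of a convolution.
  set aNeg : E → ℝ := fun x => a (-x)
  have haNeg : ContDiff ℝ 1 aNeg := ha.comp contDiff_neg
  have hacNeg : HasCompactSupport aNeg := hac.comp_homeomorph (.neg E)
  have fderiv_aNeg (x v : E) : fderiv ℝ aNeg x v = -fderiv ℝ a (-x) v := by
    simpa [aNeg] using DFunLike.congr_fun (fderiv_comp_smul (f := a) (c := (-1 : ℝ)) (x := x)) v
  have fderiv_comm (v : E) :
      (fun x => fderiv ℝ b x v) ⋆[.mul ℝ ℝ, μ] aNeg =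
        b ⋆[.mul ℝ ℝ, μ] fun x => fderiv ℝ aNeg x v := by
    ext x
    rw [← fderiv_convolution_mul_right hb.continuous haNeg hacNeg, convolution_mul_comm b,
      fderiv_convolution_mul_right haNeg.continuous hb hbc, convolution_mul_comm]
  have key : ((fun x => fderiv ℝ b x w) ⋆[.mul ℝ ℝ, μ] fun x => fderiv ℝ aNeg x v) 0 =
      ((fun x => fderiv ℝ b x v) ⋆[.mul ℝ ℝ, μ] fun x => fderiv ℝ aNeg x w) 0 := by
    rw [← fderiv_convolution_mul_right (cont_fderiv hb w) haNeg hacNeg, fderiv_comm,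
      convolution_mul_comm b, fderiv_convolution_mul_right (cont_fderiv haNeg w) hb hbc,
      convolution_mul_comm]
  simpa [convolution_def, fderiv_aNeg, mul_comm, integral_neg] using key

theorem integral_fderiv_mul_fderiv_comm {a φ : E → ℝ} (ha : ContDiff ℝ 1 a)
    (hφ : ContDiff ℝ 1 φ) (hc : HasCompactSupport φ) (v w : E) :
    ∫ x, fderiv ℝ a x v * fderiv ℝ φ x w ∂μ = ∫ x, fderiv ℝ a x w * fderiv ℝ φ x v ∂μ := by
  obtain ⟨R, hR⟩ := hc.isCompact.isBounded.subset_ball 0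
  let χ : ContDiffBump (0 : E) := ⟨max R 1, max R 1 + 1, by positivity, by simp⟩
  have hχa : ContDiff ℝ 1 fun x => χ x * a x := χ.contDiff.mul ha
  have key := integral_fderiv_mul_fderiv_comm_of_hasCompactSupport (μ := μ) hχa
    χ.hasCompactSupport.mul_right hφ hc v w
  have fderiv_eq (v w x : E) : fderiv ℝ (fun x => χ x * a x) x v * fderiv ℝ φ x w =
      fderiv ℝ a x v * fderiv ℝ φ x w := by
    by_cases hx : x ∈ tsupport φ
    · have : (fun x => χ x * a x) =ᶠ[nhds x] a := by
        filter_upwards [χ.eventuallyEq_one_of_mem_ball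
          (ball_subset_ball (le_max_left R 1) (hR hx))] with y hy
        simp [hy]
      rw [this.fderiv_eq]
    · simp [image_eq_zero_of_notMem_tsupport (fun h => hx (tsupport_fderiv_subset ℝ h))]
  simpa only [fderiv_eq] using key

end Jacobian

section Cutoff

open scoped ContDiff

theorem exists_contDiff_cutoff (E : Type*) [NormedAddCommGroup E] [NormedSpace ℝ E]
    [FiniteDimensional ℝ E] :
    ∃ M : ℝ, ∀ R : ℝ, 0 < R → ∃ η : E → ℝ, ContDiff ℝ ∞ η ∧ HasCompactSupport η ∧
      (∀ x, η x ∈ Set.Icc 0 1) ∧ (∀ x ∈ closedBall 0 R, η x = 1) ∧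
      (∀ x, ‖fderiv ℝ η x‖ ≤ M / R) ∧
      ∀ x ∉ ball 0 (2 * R) \ closedBall 0 R, fderiv ℝ η x = 0 := by
  let χ : ContDiffBump (0 : E) := ⟨1, 2, one_pos, one_lt_two⟩
  have hχ : ContDiff ℝ ∞ χ := χ.contDiff
  obtain ⟨M, hM⟩ := (hχ.continuous_fderiv (by simp)).bounded_above_of_compact_support
    (χ.hasCompactSupport.fderiv ℝ)
  refine ⟨M, fun R hR => ?_⟩
  have norm_smul_inv (x : E) : ‖R⁻¹ • x‖ = R⁻¹ * ‖x‖ := by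
    rw [norm_smul, norm_inv, norm_of_nonneg hR.le]
  have eq_one {x : E} (hx : x ∈ closedBall 0 R) : χ (R⁻¹ • x) = 1 := by
    refine χ.one_of_mem_closedBall (mem_closedBall_zero_iff.2 ?_)
    simpa [norm_smul_inv, inv_mul_le_iff₀ hR, χ] using hx
  have eq_zero {x : E} (hx : x ∉ ball 0 (2 * R)) : χ (R⁻¹ • x) = 0 := by
    refine χ.zero_of_le_dist ?_
    simpa [norm_smul_inv, le_inv_mul_iff₀ hR, χ, mul_comm] using hx
  refine ⟨fun x => χ (R⁻¹ • x), hχ.comp (contDiff_const_smul _),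
    χ.hasCompactSupport.comp_smul (inv_ne_zero hR.ne'), fun x => ⟨χ.nonneg, χ.le_one⟩,
    fun x => eq_one, fun x => ?_, fun x hx => ?_⟩
  · rw [fderiv_comp_smul, norm_smul, norm_inv, norm_of_nonneg hR.le, div_eq_inv_mul]
    gcongr
    exact hM _
  · by_cases hxR : x ∈ closedBall 0 R
    · exact IsLocalMax.fderiv_eq_zero (.of_forall fun y => χ.le_one.trans_eq (eq_one hxR).symm)
    · have hx2R : x ∉ ball 0 (2 * R) := fun h => hx ⟨h, hxR⟩
      exact IsLocalMin.fderiv_eq_zero (.of_forall fun y => (eq_zero hx2R).trans_le χ.nonneg)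

end Cutoff

section HoleFilling

theorem sq_integral_le_measureReal_mul_integral_sq {X : Type*} [MeasurableSpace X]
    {μ : Measure X} [IsFiniteMeasure μ] {h : X → ℝ} (hh : Integrable h μ)
    (hh2 : Integrable (fun x => h x ^ 2) μ) :
    (∫ x, h x ∂μ) ^ 2 ≤ μ.real Set.univ * ∫ x, h x ^ 2 ∂μ := by
  have quadratic_nonneg (c : ℝ) : 0 ≤ (∫ x, h x ^ 2 ∂μ) * (c * c) +
      (-2 * ∫ x, h x ∂μ) * c + μ.real Set.univ := by
    have hsub : Integrable (fun x => c * c * h x ^ 2 - 2 * c * h x) μ :=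
      (hh2.const_mul _).sub (hh.const_mul _)
    calc 0 ≤ ∫ x, (c * h x - 1) ^ 2 ∂μ := integral_nonneg fun x => sq_nonneg _
      _ = ∫ x, (c * c * h x ^ 2 - 2 * c * h x + 1) ∂μ := by congr! 2; ring
      _ = c * c * ∫ x, h x ^ 2 ∂μ - 2 * c * ∫ x, h x ∂μ + μ.real Set.univ := by
        rw [integral_add hsub (integrable_const _),
          integral_sub (hh2.const_mul _) (hh.const_mul _), integral_const_mul, integral_const_mul]
        simp
      _ = _ := by ring
  have discrim_le := discrim_le_zero quadratic_nonneg
  rw [discrim] at discrim_le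
  linarith

theorem integrable_sq_mul {X : Type*} [TopologicalSpace X] [MeasurableSpace X]
    [OpensMeasurableSpace X] {μ : Measure X} [IsFiniteMeasureOnCompacts μ]
    {e η : X → ℝ} (he : Continuous e) (hη : Continuous η)
    (hηc : HasCompactSupport η) : Integrable (fun x => η x ^ 2 * e x) μ :=
  Continuous.integrable_of_hasCompactSupport (by fun_prop)
    (hηc.comp_left (g := fun y : ℝ => y ^ 2) (by norm_num)).mul_right

theorem setIntegral_le_integral_sq_mul {X : Type*} [MeasurableSpace X]
    {μ : Measure X} {e η : X → ℝ} {s : Set X} (hs : MeasurableSet s)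
    (he0 : ∀ x, 0 ≤ e x) (hη : Integrable (fun x => η x ^ 2 * e x) μ) (hη1 : ∀ x ∈ s, η x = 1) :
    ∫ x in s, e x ∂μ ≤ ∫ x, η x ^ 2 * e x ∂μ := by
  calc ∫ x in s, e x ∂μ = ∫ x in s, η x ^ 2 * e x ∂μ :=
        setIntegral_congr_fun hs fun x hx => by simp [hη1 x hx]
    _ ≤ _ := setIntegral_le_integral hη (.of_forall fun x => mul_nonneg (sq_nonneg _) (he0 x))

theorem setIntegral_sq_mul_le_setIntegral {X : Type*} [MeasurableSpace X]
    {μ : Measure X} {e η : X → ℝ} {s t : Set X} (hst : s ⊆ t)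
    (he0 : ∀ x, 0 ≤ e x) (he : IntegrableOn e t μ)
    (hη : Integrable (fun x => η x ^ 2 * e x) μ) (hη01 : ∀ x, η x ∈ Set.Icc 0 1) :
    ∫ x in s, η x ^ 2 * e x ∂μ ≤ ∫ x in t, e x ∂μ :=
  (setIntegral_mono_set hη.integrableOn (.of_forall fun x => mul_nonneg (sq_nonneg _) (he0 x))
    hst.eventuallyLE).trans (setIntegral_mono hη.integrableOn he fun x =>
      mul_le_of_le_one_left (he0 x) (pow_le_one₀ (hη01 x).1 (hη01 x).2))

theorem eq_zero_of_sq_le_mul_sub {a : ℕ → ℝ} {B : ℝ} (ha0 : ∀ n, 0 ≤ a n) (ha : Monotone a)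
    (haB : ∀ n, a n ≤ B) (h : ∀ n, a n ^ 2 ≤ B * (a (n + 1) - a n)) (n : ℕ) : a n = 0 := by
  have hbdd : BddAbove (Set.range a) := ⟨B, Set.forall_mem_range.2 haB⟩
  have hlim := tendsto_atTop_ciSup ha hbdd
  have hsq : (⨆ n, a n) ^ 2 ≤ B * ((⨆ n, a n) - ⨆ n, a n) :=
    le_of_tendsto_of_tendsto' (hlim.pow 2)
      (((hlim.comp (Filter.tendsto_add_atTop_nat 1)).sub hlim).const_mul B) h
  have hsup : ⨆ n, a n = 0 := by simpa using hsq
  exact le_antisymm (hsup ▸ le_ciSup hbdd n) (ha0 n)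

variable {E : Type*} [NormedAddCommGroup E] [NormedSpace ℝ E] [MeasurableSpace E]
  [BorelSpace E] {μ : Measure E} [μ.IsAddHaarMeasure]

theorem sq_integral_sq_mul_le_of_caccioppoli {e η : E → ℝ} {C δ : ℝ} {s : Set E}
    (he : Continuous e) (he0 : ∀ x, 0 ≤ e x) (hη : Continuous η) (hηc : HasCompactSupport η)
    (hC : 0 ≤ C) (hδ : ∀ x, ‖fderiv ℝ η x‖ ≤ δ) (hs : μ s ≠ ∞)
    (hηs : ∀ x ∉ s, fderiv ℝ η x = 0)
    (H : ∫ x, η x ^ 2 * e x ∂μ ≤ C * ∫ x, |η x| * √(e x) * ‖fderiv ℝ η x‖ ∂μ) :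
    (∫ x, η x ^ 2 * e x ∂μ) ^ 2 ≤
      C ^ 2 * δ ^ 2 * μ.real s * ∫ x in s, η x ^ 2 * e x ∂μ := by
  set h : E → ℝ := fun x => |η x| * √(e x)
  have hsq (x : E) : h x ^ 2 = η x ^ 2 * e x := by
    rw [mul_pow, sq_abs, sq_sqrt (he0 x)]
  have hint : Integrable h μ :=
    Continuous.integrable_of_hasCompactSupport (by fun_prop) hηc.abs.mul_right
  have hint2 : Integrable (fun x => h x ^ 2) μ :=
    Continuous.integrable_of_hasCompactSupport (by fun_prop)
      (hηc.abs.mul_right.comp_left (g := fun y => y ^ 2) (by norm_num))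
  have hle : ∫ x, h x * ‖fderiv ℝ η x‖ ∂μ ≤ ∫ x in s, h x * δ ∂μ := by
    rw [← setIntegral_eq_integral_of_forall_compl_eq_zero (s := s) fun x hx => by simp [hηs x hx]]
    refine integral_mono_of_nonneg (.of_forall fun x => by positivity)
      (hint.mul_const δ).integrableOn (.of_forall fun x => ?_)
    exact mul_le_mul_of_nonneg_left (hδ x) (by positivity)
  simp only [← hsq] at H ⊢
  calc (∫ x, h x ^ 2 ∂μ) ^ 2 ≤ (C * ∫ x in s, h x * δ ∂μ) ^ 2 :=
        pow_le_pow_left₀ (integral_nonneg fun x => sq_nonneg _)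
          (H.trans (mul_le_mul_of_nonneg_left hle hC)) 2
    _ = C ^ 2 * δ ^ 2 * (∫ x in s, h x ∂μ) ^ 2 := by rw [integral_mul_const]; ring
    _ ≤ C ^ 2 * δ ^ 2 * (μ.real s * ∫ x in s, h x ^ 2 ∂μ) := by
        have : IsFiniteMeasure (μ.restrict s) := isFiniteMeasure_restrict.2 hs
        gcongr
        simpa using sq_integral_le_measureReal_mul_integral_sq hint.integrableOn hint2.integrableOn
    _ = _ := by ring

theorem measureReal_ball_le_sq_mul [FiniteDimensional ℝ E] (hdim : Module.finrank ℝ E ≤ 2) (x : E)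
    {R : ℝ} (hR : 1 ≤ R) : μ.real (ball x R) ≤ R ^ 2 * μ.real (ball (0 : E) 1) := by
  rw [Measure.real, Measure.addHaar_ball_of_pos μ x (zero_lt_one.trans_le hR), ENNReal.toReal_mul,
    ENNReal.toReal_ofReal (by positivity)]
  exact mul_le_mul_of_nonneg_right (pow_le_pow_right₀ hR hdim) ENNReal.toReal_nonneg

variable [FiniteDimensional ℝ E] {e : E → ℝ} {C : ℝ}

theorem exists_hole_filling_bound (hdim : Module.finrank ℝ E ≤ 2) (he : Continuous e)
    (he0 : ∀ x, 0 ≤ e x) (hC : 0 ≤ C)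
    (H : ∀ η : E → ℝ, ContDiff ℝ 1 η → HasCompactSupport η →
      ∫ x, η x ^ 2 * e x ∂μ ≤ C * ∫ x, |η x| * √(e x) * ‖fderiv ℝ η x‖ ∂μ) :
    ∃ B : ℝ, ∀ R : ℝ, 1 ≤ R → ∫ x in closedBall 0 R, e x ∂μ ≤ B ∧
      (∫ x in closedBall 0 R, e x ∂μ) ^ 2 ≤
        B * (∫ x in closedBall 0 (2 * R), e x ∂μ - ∫ x in closedBall 0 R, e x ∂μ) := by
  obtain ⟨M, hM⟩ := exists_contDiff_cutoff E
  set B : ℝ := C ^ 2 * M ^ 2 * (4 * μ.real (ball (0 : E) 1)) with hB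
  have hB0 : 0 ≤ B := by positivity
  refine ⟨B, fun R hR => ?_⟩
  have hR0 : 0 < R := by linarith
  obtain ⟨η, hη, hηc, hη01, hη1, hηM, hηs⟩ := hM R hR0
  set s := ball (0 : E) (2 * R) \ closedBall 0 R
  have hs : μ s ≠ ∞ := ((measure_mono Set.sdiff_subset).trans_lt measure_ball_lt_top).ne
  have hint : Integrable (fun x => η x ^ 2 * e x) μ := integrable_sq_mul he hη.continuous hηc
  have hnn (x : E) : 0 ≤ η x ^ 2 * e x := mul_nonneg (sq_nonneg _) (he0 x)
  have integrableOn_closedBall (r : ℝ) : IntegrableOn e (closedBall 0 r) μ :=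
    he.continuousOn.integrableOn_compact (isCompact_closedBall 0 r)
  have ball_le : ∫ x in closedBall 0 R, e x ∂μ ≤ ∫ x, η x ^ 2 * e x ∂μ :=
    setIntegral_le_integral_sq_mul measurableSet_closedBall he0 hint hη1
  have annulus_le : ∫ x in s, η x ^ 2 * e x ∂μ ≤
      ∫ x in closedBall 0 (2 * R), e x ∂μ - ∫ x in closedBall 0 R, e x ∂μ := by
    rw [← setIntegral_sdiff measurableSet_closedBall (integrableOn_closedBall _)
      (closedBall_subset_closedBall (by linarith))]
    exact setIntegral_sq_mul_le_setIntegral (Set.sdiff_subset_sdiff_left ball_subset_closedBall) he0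
      ((integrableOn_closedBall _).mono_set Set.sdiff_subset) hint hη01
  -- In dimension at most two the annulus has measure `O(R²)`, which absorbs `‖∇η‖² = O(R⁻²)`.
  have volume_le : C ^ 2 * (M / R) ^ 2 * μ.real s ≤ B := by
    calc C ^ 2 * (M / R) ^ 2 * μ.real s
        ≤ C ^ 2 * (M / R) ^ 2 * ((2 * R) ^ 2 * μ.real (ball (0 : E) 1)) := by
          gcongr
          exact (measureReal_mono Set.sdiff_subset measure_ball_lt_top.ne).trans
            (measureReal_ball_le_sq_mul hdim 0 (by linarith))
      _ = B := by rw [hB]; field_simp; ring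
  have energy_sq_le : (∫ x, η x ^ 2 * e x ∂μ) ^ 2 ≤ B * ∫ x in s, η x ^ 2 * e x ∂μ :=
    (sq_integral_sq_mul_le_of_caccioppoli he he0 hη.continuous hηc hC hηM hs hηs
      (H η (hη.of_le (by simp)) hηc)).trans
      (mul_le_mul_of_nonneg_right volume_le (integral_nonneg hnn))
  constructor
  · have energy_sq_le' := energy_sq_le.trans
      (mul_le_mul_of_nonneg_left (setIntegral_le_integral hint (.of_forall hnn)) hB0)
    refine ball_le.trans (le_of_not_gt fun hlt => ?_)
    nlinarith
  · calc (∫ x in closedBall 0 R, e x ∂μ) ^ 2 ≤ (∫ x, η x ^ 2 * e x ∂μ) ^ 2 :=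
          pow_le_pow_left₀ (integral_nonneg he0) ball_le 2
      _ ≤ _ := energy_sq_le.trans (mul_le_mul_of_nonneg_left annulus_le hB0)

theorem eq_zero_of_caccioppoli (hdim : Module.finrank ℝ E ≤ 2) (he : Continuous e)
    (he0 : ∀ x, 0 ≤ e x) (hC : 0 ≤ C)
    (H : ∀ η : E → ℝ, ContDiff ℝ 1 η → HasCompactSupport η →
      ∫ x, η x ^ 2 * e x ∂μ ≤ C * ∫ x, |η x| * √(e x) * ‖fderiv ℝ η x‖ ∂μ) (x : E) :
    e x = 0 := by
  obtain ⟨B, hB⟩ := exists_hole_filling_bound hdim he he0 hC H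
  have integrableOn_ball (r : ℝ) : IntegrableOn e (closedBall 0 r) μ :=
    he.continuousOn.integrableOn_compact (isCompact_closedBall 0 r)
  have one_le_pow (n : ℕ) : (1 : ℝ) ≤ 2 ^ n := one_le_pow₀ one_le_two
  have energy_eq_zero (n : ℕ) : ∫ x in closedBall 0 (2 ^ n), e x ∂μ = 0 := by
    refine eq_zero_of_sq_le_mul_sub (fun n => integral_nonneg he0) (fun m n hmn => ?_)
      (fun n => (hB _ (one_le_pow n)).1) (fun n => ?_) n
    · exact setIntegral_mono_set (integrableOn_ball _) (.of_forall he0)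
        (closedBall_subset_closedBall (pow_le_pow_right₀ one_le_two hmn)).eventuallyLE
    · rw [pow_succ' 2 n]
      exact (hB _ (one_le_pow n)).2
  obtain ⟨n, hn⟩ := pow_unbounded_of_one_lt ‖x‖ one_lt_two
  have ae_eq_zero := (integral_eq_zero_iff_of_nonneg he0 (integrableOn_ball _)).1 (energy_eq_zero n)
  exact Measure.eqOn_open_of_ae_eq (ae_restrict_of_ae_restrict_of_subset ball_subset_closedBall
    ae_eq_zero) isOpen_ball he.continuousOn continuousOn_const (mem_ball_zero_iff.2 hn)

end HoleFilling

section FDeriv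

variable {E : Type*} [NormedAddCommGroup E] [NormedSpace ℝ E]

theorem contDiff_fderiv_apply {u : E → ℝ} (hu : ContDiff ℝ 2 u) (v : E) :
    ContDiff ℝ 1 fun y => fderiv ℝ u y v :=
  (hu.fderiv_right (m := 1) (by norm_num)).clm_apply contDiff_const

theorem fderiv_fderiv_apply {u : E → ℝ} (hu : ContDiff ℝ 2 u) (v x w : E) :
    fderiv ℝ (fun y => fderiv ℝ u y v) x w = fderiv ℝ (fderiv ℝ u) x w v := by
  have : DifferentiableAt ℝ (fderiv ℝ u) x :=
    (hu.fderiv_right (m := 1) (by norm_num)).differentiable one_ne_zero x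
  simp [fderiv_clm_apply this (differentiableAt_const v)]

theorem fderiv_fderiv_comm {u : E → ℝ} (hu : ContDiff ℝ 2 u) (x v w : E) :
    fderiv ℝ (fderiv ℝ u) x v w = fderiv ℝ (fderiv ℝ u) x w v :=
  hu.contDiffAt.isSymmSndFDerivAt (by simp) v w

end FDeriv

section Gradient

open InnerProductSpace

variable {E : Type*} [NormedAddCommGroup E] [InnerProductSpace ℝ E] [CompleteSpace E]

theorem norm_gradient (u : E → ℝ) (x : E) : ‖gradient u x‖ = ‖fderiv ℝ u x‖ :=
  (toDual ℝ E).symm.norm_map _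

theorem continuous_gradient {u : E → ℝ} (hu : ContDiff ℝ 1 u) : Continuous (gradient u) :=
  (toDual ℝ E).symm.continuous.comp (hu.continuous_fderiv one_ne_zero)

theorem contDiff_gradient {n : ℕ∞} {u : E → ℝ} (hu : ContDiff ℝ (n + 1) u) :
    ContDiff ℝ n (gradient u) :=
  (toDual ℝ E).symm.contDiff.comp (hu.fderiv_right le_rfl)

theorem fderiv_gradient_apply {u : E → ℝ} (hu : ContDiff ℝ 2 u) (x v : E) :
    fderiv ℝ (gradient u) x v = gradient (fun y => fderiv ℝ u y v) x := by
  refine ext_inner_right ℝ fun w => ?_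
  have hgrad : DifferentiableAt ℝ (gradient u) x :=
    (contDiff_gradient (n := 1) hu).differentiable one_ne_zero x
  have h := fderiv_inner_apply ℝ hgrad (differentiableAt_const w) v
  simp only [inner_gradient_left, fderiv_fun_const, Pi.zero_apply, zero_apply,
    inner_zero_right, zero_add] at h
  rw [← h, inner_gradient_left, fderiv_fderiv_apply hu, fderiv_fderiv_apply hu,
    fderiv_fderiv_comm hu]

theorem fderiv_fderiv_gradient_apply {f u : E → ℝ} (hf : ContDiff ℝ 2 f) (hu : ContDiff ℝ 2 u)
    (a x v : E) :
    fderiv ℝ (fun y => fderiv ℝ f (gradient u y) a) x v =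
      fderiv ℝ (fderiv ℝ f) (gradient u x) (gradient (fun y => fderiv ℝ u y v) x) a := by
  have hdu : DifferentiableAt ℝ (gradient u) x :=
    (contDiff_gradient (n := 1) hu).differentiable one_ne_zero x
  have hdf : DifferentiableAt ℝ (fun p => fderiv ℝ f p a) (gradient u x) :=
    (contDiff_fderiv_apply hf a).differentiable one_ne_zero _
  have := fderiv_comp (g := fun p => fderiv ℝ f p a) x hdf hdu
  simp only [Function.comp_def] at this
  rw [this, ContinuousLinearMap.comp_apply, fderiv_gradient_apply hu, fderiv_fderiv_apply hf]

theorem gradient_sq_mul_comp {η w : E → ℝ} {g : ℝ → ℝ} {x : E} (hη : DifferentiableAt ℝ η x)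
    (hw : DifferentiableAt ℝ w x) (hg : DifferentiableAt ℝ g (w x)) :
    gradient (fun y => η y ^ 2 * g (w y)) x =
      (η x ^ 2 * deriv g (w x)) • gradient w x + (2 * η x * g (w x)) • gradient η x := by
  have h : HasFDerivAt (fun y => η y ^ 2 * g (w y)) _ x :=
    (hη.hasFDerivAt.pow 2).mul (hg.hasDerivAt.comp_hasFDerivAt x hw.hasFDerivAt)
  refine ext_inner_right ℝ fun v => ?_
  rw [inner_gradient_left, h.fderiv, inner_add_left, real_inner_smul_left, real_inner_smul_left,
    inner_gradient_left, inner_gradient_left]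
  simp
  ring

theorem eq_inner_add_of_gradient_eq {u : E → ℝ} {p : E} (hu : Differentiable ℝ u)
    (hp : ∀ x, gradient u x = p) (x : E) : u x = ⟪p, x⟫_ℝ + u 0 := by
  have fderiv_sub_eq_zero (x : E) : fderiv ℝ (fun y => u y - toDual ℝ E p y) x = 0 := by
    rw [fderiv_fun_sub (hu x) (toDual ℝ E p).differentiableAt, ContinuousLinearMap.fderiv,
      ← toDual_gradient, hp, sub_self]
  have := is_const_of_fderiv_eq_zero (hu.fun_sub (toDual ℝ E p).differentiable)
    fderiv_sub_eq_zero x 0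
  simp only [toDual_apply_apply, inner_zero_right] at this
  linarith

theorem exists_eq_inner_add_of_gradient_fderiv_eq_zero {ι : Type*} (b : Module.Basis ι ℝ E)
    {u : E → ℝ} (hu : ContDiff ℝ 2 u)
    (h : ∀ x i, gradient (fun y => fderiv ℝ u y (b i)) x = 0) :
    ∃ (p : E) (c : ℝ), ∀ x, u x = ⟪p, x⟫_ℝ + c := by
  have gradient_const (x : E) : gradient u x = gradient u 0 :=
    is_const_of_fderiv_eq_zero ((contDiff_gradient (n := 1) hu).differentiable one_ne_zero)
      (fun x => ContinuousLinearMap.coe_injective <| b.ext fun i => by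
        simp [fderiv_gradient_apply hu, h]) x 0
  exact ⟨_, _, eq_inner_add_of_gradient_eq (hu.differentiable two_ne_zero) gradient_const⟩

end Gradient

section LinearizedEquation

variable {E : Type*} [NormedAddCommGroup E] [NormedSpace ℝ E] [FiniteDimensional ℝ E]
  [MeasurableSpace E] [BorelSpace E] {μ : Measure E} [μ.IsAddHaarMeasure]

theorem integral_sum_fderiv_mul_fderiv_eq_zero {ι : Type*} [Fintype ι] {A : ι → E → ℝ} {e : ι → E}
    (hA : ∀ i, ContDiff ℝ 1 (A i)) (hdiv : ∀ x, ∑ i, fderiv ℝ (A i) x (e i) = 0) {φ : E → ℝ}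
    (hφ : ContDiff ℝ 1 φ) (hc : HasCompactSupport φ) (v : E) :
    ∫ x, ∑ i, fderiv ℝ (A i) x v * fderiv ℝ φ x (e i) ∂μ = 0 := by
  have integrable (i : ι) (v w : E) :
      Integrable (fun x => fderiv ℝ (A i) x v * fderiv ℝ φ x w) μ := by
    have := (hA i).continuous_fderiv_apply one_ne_zero
    have := hφ.continuous_fderiv_apply one_ne_zero
    exact Continuous.integrable_of_hasCompactSupport (by fun_prop)
      (hc.fderiv_apply ℝ w).mul_left
  calc ∫ x, ∑ i, fderiv ℝ (A i) x v * fderiv ℝ φ x (e i) ∂μ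
      = ∑ i, ∫ x, fderiv ℝ (A i) x v * fderiv ℝ φ x (e i) ∂μ :=
        integral_finsetSum _ fun i _ => integrable i v (e i)
    _ = ∑ i, ∫ x, fderiv ℝ (A i) x (e i) * fderiv ℝ φ x v ∂μ :=
        Finset.sum_congr rfl fun i _ => integral_fderiv_mul_fderiv_comm (hA i) hφ hc v (e i)
    _ = ∫ x, (∑ i, fderiv ℝ (A i) x (e i)) * fderiv ℝ φ x v ∂μ := by
        simp only [Finset.sum_mul]
        exact (integral_finsetSum _ fun i _ => integrable i (e i) v).symm
    _ = 0 := by simp [hdiv]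

end LinearizedEquation

section BilinearForm

variable {E : Type*} [NormedAddCommGroup E] [NormedSpace ℝ E] {B : E →L[ℝ] E →L[ℝ] ℝ}

theorem abs_apply_le_sqrt_mul_sqrt (hsymm : ∀ v w, B v w = B w v) (hnn : ∀ v, 0 ≤ B v v)
    (v w : E) : |B v w| ≤ √(B v v) * √(B w w) := by
  rw [← sqrt_mul (hnn v)]
  exact abs_le_sqrt (LinearMap.BilinForm.apply_sq_le_of_symm B.toLinearMap₁₂ hnn ⟨hsymm⟩ v w)

theorem abs_apply_le_sqrt_mul_norm (hsymm : ∀ v w, B v w = B w v) (hnn : ∀ v, 0 ≤ B v v) {c : ℝ}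
    (hc : 0 ≤ c) (hB : ∀ v, B v v ≤ c * ‖v‖ ^ 2) (v w : E) :
    |B v w| ≤ √(c * B v v) * ‖w‖ := by
  calc |B v w| ≤ √(B v v) * √(B w w) := abs_apply_le_sqrt_mul_sqrt hsymm hnn v w
    _ ≤ √(B v v) * √(c * ‖w‖ ^ 2) := by
        gcongr
        exact hB w
    _ = √(c * B v v) * ‖w‖ := by
        rw [sqrt_mul hc, sqrt_mul hc, sqrt_sq (norm_nonneg w)]
        ring

end BilinearForm

theorem exists_bounded_primitive {ω : ℝ → ℝ} (hω : Continuous ω) (hωi : Integrable ω) :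
    ∃ g : ℝ → ℝ, ContDiff ℝ 1 g ∧ deriv g = ω ∧ ∀ t, |g t| ≤ ∫ s, |ω s| := by
  have hderiv : deriv (fun t => ∫ s in 0..t, ω s) = ω :=
    funext fun t => (hω.integral_hasStrictDerivAt 0 t).hasDerivAt.deriv
  refine ⟨fun t => ∫ s in 0..t, ω s, ?_, hderiv, fun t => ?_⟩
  · rw [contDiff_one_iff_deriv, hderiv]
    exact ⟨fun t => (hω.integral_hasStrictDerivAt 0 t).hasDerivAt.differentiableAt, hω⟩
  · calc |∫ s in 0..t, ω s| ≤ ∫ s in Set.uIoc 0 t, |ω s| :=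
          intervalIntegral.norm_integral_le_integral_norm_uIoc (f := ω) (μ := volume)
      _ ≤ ∫ s, |ω s| := setIntegral_le_integral hωi.abs (.of_forall fun s => abs_nonneg _)

section WeakSolution

open InnerProductSpace

variable {E : Type*} [NormedAddCommGroup E] [InnerProductSpace ℝ E] [FiniteDimensional ℝ E]
  [MeasurableSpace E]

/-- Weak solutions `w` of `div (D ∇w) = 0`, for a field `D` of bilinear forms, tested against
compactly supported `C¹` functions. It is meant for `D` continuous and `w` of class `C¹`: the
integral of a non-integrable function is `0`. -/
def IsWeakSolution (μ : Measure E) (D : E → E →L[ℝ] E →L[ℝ] ℝ) (w : E → ℝ) : Prop :=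
  ∀ φ : E → ℝ, ContDiff ℝ 1 φ → HasCompactSupport φ →
    ∫ x, D x (gradient w x) (gradient φ x) ∂μ = 0

variable [BorelSpace E] {μ : Measure E}

theorem isWeakSolution_fderiv_apply [μ.IsAddHaarMeasure] {ι : Type*} [Fintype ι]
    (b : OrthonormalBasis ι ℝ E) {f u : E → ℝ} (hf : ContDiff ℝ 2 f) (hu : ContDiff ℝ 2 u)
    (heq : ∀ x, ∑ i, fderiv ℝ (fun y => fderiv ℝ f (gradient u y) (b i)) x (b i) = 0) (v : E) :
    IsWeakSolution μ (fun x => fderiv ℝ (fderiv ℝ f) (gradient u x)) fun y => fderiv ℝ u y v := by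
  intro φ hφ hc
  have flux_contDiff (i : ι) : ContDiff ℝ 1 fun y => fderiv ℝ f (gradient u y) (b i) :=
    (contDiff_fderiv_apply hf (b i)).comp (contDiff_gradient (n := 1) hu)
  rw [← integral_sum_fderiv_mul_fderiv_eq_zero (μ := μ) flux_contDiff heq hφ hc v]
  congr! 2 with x
  conv_lhs => rw [← b.sum_repr' (gradient φ x)]
  simp only [map_sum, map_smul, smul_eq_mul, inner_gradient_right, conj_trivial,
    fderiv_fderiv_gradient_apply hf hu, mul_comm]

variable {D : E → E →L[ℝ] E →L[ℝ] ℝ} {w : E → ℝ} {ω : ℝ → ℝ}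

theorem IsWeakSolution.integral_sq_mul_eq [IsFiniteMeasureOnCompacts μ]
    (h : IsWeakSolution μ D w) (hD : Continuous D) (hw : ContDiff ℝ 1 w) {g : ℝ → ℝ}
    (hg : ContDiff ℝ 1 g) {η : E → ℝ} (hη : ContDiff ℝ 1 η) (hηc : HasCompactSupport η) :
    ∫ x, η x ^ 2 * (deriv g (w x) * D x (gradient w x) (gradient w x)) ∂μ =
      -∫ x, 2 * η x * g (w x) * D x (gradient w x) (gradient η x) ∂μ := by
  have hgradw : Continuous (gradient w) := continuous_gradient hw
  have hgradη : Continuous (gradient η) := continuous_gradient hη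
  have : Continuous (deriv g) := hg.continuous_deriv le_rfl
  have hη2 : HasCompactSupport fun x => η x ^ 2 := hηc.comp_left (g := fun y => y ^ 2) (by norm_num)
  have hφ : ContDiff ℝ 1 fun x => η x ^ 2 * g (w x) := (hη.pow 2).mul (hg.comp hw)
  have hw0 := hw.continuous
  have hη0 := hη.continuous
  have hg0 := hg.continuous
  rw [eq_neg_iff_add_eq_zero, ← integral_add, ← h _ hφ hη2.mul_right]
  · congr! 2 with x
    rw [gradient_sq_mul_comp (hη.differentiable one_ne_zero x) (hw.differentiable one_ne_zero x)
        (hg.differentiable one_ne_zero _), map_add, map_smul, map_smul, smul_eq_mul, smul_eq_mul]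
    ring
  · exact integrable_sq_mul (by fun_prop) hη0 hηc
  · exact Continuous.integrable_of_hasCompactSupport (by fun_prop) hηc.mul_left.mul_right.mul_right

theorem IsWeakSolution.caccioppoli [IsFiniteMeasureOnCompacts μ] (h : IsWeakSolution μ D w)
    (hD : Continuous D) (hsymm : ∀ x v z, D x v z = D x z v) (hnn : ∀ x v, 0 ≤ D x v v)
    (hw : ContDiff ℝ 1 w) (hω : Continuous ω) (hωi : Integrable ω)
    (hDω : ∀ x z, D x z z ≤ ω (w x) * ‖z‖ ^ 2) (hω0 : ∀ x, 0 ≤ ω (w x))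
    {η : E → ℝ} (hη : ContDiff ℝ 1 η) (hηc : HasCompactSupport η) :
    ∫ x, η x ^ 2 * (ω (w x) * D x (gradient w x) (gradient w x)) ∂μ ≤
      2 * (∫ t, |ω t|) * ∫ x, |η x| * √(ω (w x) * D x (gradient w x) (gradient w x)) *
        ‖fderiv ℝ η x‖ ∂μ := by
  obtain ⟨g, hg, rfl, hgB⟩ := exists_bounded_primitive hω hωi
  set B := ∫ t, |deriv g t|
  have hgradw : Continuous (gradient w) := continuous_gradient hw
  have hw0 := hw.continuous
  have hη0 := hη.continuous
  have := hη.continuous_fderiv one_ne_zero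
  have abs_apply_le (x : E) : |D x (gradient w x) (gradient η x)| ≤
      √(deriv g (w x) * D x (gradient w x) (gradient w x)) * ‖fderiv ℝ η x‖ := by
    rw [← norm_gradient η]
    exact abs_apply_le_sqrt_mul_norm (hsymm x) (hnn x) (hω0 x) (hDω x) _ _
  rw [h.integral_sq_mul_eq hD hw hg hη hηc, ← integral_const_mul]
  refine (neg_le_abs _).trans (abs_integral_le_integral_abs.trans
    (integral_mono_of_nonneg (.of_forall fun x => abs_nonneg _)
      (Continuous.integrable_of_hasCompactSupport (by fun_prop)
        hηc.abs.mul_right.mul_right.mul_left) (.of_forall fun x => ?_)))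
  calc |2 * η x * g (w x) * D x (gradient w x) (gradient η x)|
      = 2 * |η x| * |g (w x)| * |D x (gradient w x) (gradient η x)| := by
        rw [abs_mul, abs_mul, abs_mul, abs_two]
    _ ≤ 2 * |η x| * B *
          (√(deriv g (w x) * D x (gradient w x) (gradient w x)) * ‖fderiv ℝ η x‖) := by
        gcongr
        exacts [hgB _, abs_apply_le x]
    _ = 2 * B * (|η x| * √(deriv g (w x) * D x (gradient w x) (gradient w x)) *
          ‖fderiv ℝ η x‖) := by ring

theorem IsWeakSolution.gradient_eq_zero [μ.IsAddHaarMeasure] (hdim : Module.finrank ℝ E ≤ 2)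
    (h : IsWeakSolution μ D w) (hD : Continuous D) (hsymm : ∀ x v z, D x v z = D x z v)
    (hpos : ∀ x v, v ≠ 0 → 0 < D x v v) (hw : ContDiff ℝ 1 w) (hω : Continuous ω)
    (hωi : Integrable ω) (hDω : ∀ x z, D x z z ≤ ω (w x) * ‖z‖ ^ 2) (x : E) :
    gradient w x = 0 := by
  by_contra hne
  have hω0 (y : E) : 0 < ω (w y) :=
    pos_of_mul_pos_left ((hpos y _ hne).trans_le (hDω y _)) (sq_nonneg _)
  have hnn (y v : E) : 0 ≤ D y v v := by
    obtain rfl | hv := eq_or_ne v 0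
    exacts [by simp, (hpos y v hv).le]
  have hgradw : Continuous (gradient w) := continuous_gradient hw
  have hw0 := hw.continuous
  have energy_eq_zero := eq_zero_of_caccioppoli (μ := μ) (C := 2 * ∫ t, |ω t|) hdim
    (e := fun y => ω (w y) * D y (gradient w y) (gradient w y)) (by fun_prop)
    (fun y => mul_nonneg (hω0 y).le (hnn _ _))
    (mul_nonneg zero_le_two (integral_nonneg fun t => abs_nonneg _))
    (fun η hη hηc => h.caccioppoli hD hsymm hnn hw hω hωi hDω (fun y => (hω0 y).le) hη hηc) x
  exact (mul_pos (hω0 x) (hpos x _ hne)).ne' energy_eq_zero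

end WeakSolution

section Weight

variable {m K r t : ℝ}

theorem log_two_add_le {s : ℝ} (hs : 0 < s) (hr : 0 ≤ r) :
    log (2 + r) ≤ 2 ^ s / s * (1 + r) ^ s := by
  refine (log_le_rpow_div (by positivity) hs).trans ?_
  rw [div_mul_eq_mul_div, ← mul_rpow zero_le_two (by positivity)]
  gcongr
  linarith

theorem one_add_abs_le_of_abs_le (hm : 0 ≤ m) (hK : 0 ≤ K) (hr : 0 ≤ r)
    (ht : |t| ≤ K * (r ^ m + 1)) : 1 + |t| ≤ (1 + 2 * K) * (1 + r) ^ m := by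
  have rpow_le : r ^ m ≤ (1 + r) ^ m := by gcongr; linarith
  have one_le : 1 ≤ (1 + r) ^ m := one_le_rpow (by linarith) hm
  nlinarith

theorem rpow_one_add_abs_mul_log_le {s : ℝ} (hm : 0 ≤ m) (hK : 0 ≤ K) (hs : 0 < s)
    (hms : m * (1 + s) + s ≤ 1) (hr : 0 ≤ r) (ht : |t| ≤ K * (r ^ m + 1)) :
    (1 + |t|) ^ (1 + s) * log (2 + r) ≤ (1 + 2 * K) ^ (1 + s) * (2 ^ s / s) * (1 + r) := by
  calc (1 + |t|) ^ (1 + s) * log (2 + r)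
      ≤ ((1 + 2 * K) * (1 + r) ^ m) ^ (1 + s) * (2 ^ s / s * (1 + r) ^ s) := by
        gcongr
        exacts [log_nonneg (by linarith), one_add_abs_le_of_abs_le hm hK hr ht,
          log_two_add_le hs hr]
    _ = (1 + 2 * K) ^ (1 + s) * (2 ^ s / s) * (1 + r) ^ (m * (1 + s) + s) := by
        rw [mul_rpow (by positivity) (by positivity), ← rpow_mul (by positivity),
          rpow_add (by positivity) (m * (1 + s)) s]
        ring
    _ ≤ (1 + 2 * K) ^ (1 + s) * (2 ^ s / s) * (1 + r) := by
        gcongr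
        exact rpow_le_self_of_one_le (by linarith) hms

theorem exists_integrable_log_div_le (hm0 : 0 ≤ m) (hm1 : m < 1) (hK : 0 ≤ K) :
    ∃ ω : ℝ → ℝ, Continuous ω ∧ Integrable ω ∧
      ∀ r t, 0 ≤ r → |t| ≤ K * (r ^ m + 1) → log (2 + r) / (1 + r) ≤ ω t := by
  obtain ⟨s, hs, hms⟩ : ∃ s, 0 < s ∧ m * (1 + s) + s ≤ 1 :=
    ⟨(1 - m) / 2, by linarith, by nlinarith⟩
  -- Since `1 + |t|` is at most of order `(1 + r) ^ m`, this weight is at least of order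
  -- `(1 + r) ^ (s - 1)`, which dominates `log (2 + r) / (1 + r)`.
  refine ⟨fun t => (1 + 2 * K) ^ (1 + s) * (2 ^ s / s) * (1 + ‖t‖) ^ (-(1 + s)), ?_,
    (integrable_one_add_norm (by simpa using hs)).const_mul _, fun r t hr ht => ?_⟩
  · exact continuous_const.mul ((continuous_const.add continuous_norm).rpow_const
      fun t => .inl (by positivity : 0 < 1 + ‖t‖).ne')
  · beta_reduce
    rw [rpow_neg (by positivity), ← div_eq_mul_inv, norm_eq_abs,
      div_le_div_iff₀ (by positivity) (by positivity), mul_comm]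
    exact rpow_one_add_abs_mul_log_le hm0 hK hs hms hr ht

end Weight

section Plane

open InnerProductSpace

theorem gradient_apply_eq_pd (u : E2 → ℝ) (x : E2) (i : Fin 2) : gradient u x i = pd u i x := by
  rw [pd, ← inner_gradient_left, ee, EuclideanSpace.inner_single_right]
  simp

theorem abs_pd_le_norm_gradient (u : E2 → ℝ) (x : E2) (i : Fin 2) :
    |pd u i x| ≤ ‖gradient u x‖ := by
  rw [← gradient_apply_eq_pd]
  exact PiLp.norm_apply_le (gradient u x) i

theorem Hess_eq_fderiv_fderiv (f : E2 → ℝ) (p q : E2) :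
    Hess f p q = fderiv ℝ (fderiv ℝ f) p q q := by
  simp [Hess, iteratedFDeriv_two_apply]

theorem pd_pd_comm {u : E2 → ℝ} (hu : ContDiff ℝ 2 u) (i j : Fin 2) (x : E2) :
    pd (pd u i) j x = pd (pd u j) i x := by
  change fderiv ℝ (fun y => fderiv ℝ u y _) x _ = fderiv ℝ (fun y => fderiv ℝ u y _) x _
  rw [fderiv_fderiv_apply hu, fderiv_fderiv_apply hu, fderiv_fderiv_comm hu]

variable {f u : E2 → ℝ}

theorem sum_hessian_gradient_pd_eq_zero (hf : ContDiff ℝ 2 f) (hu : ContDiff ℝ 2 u)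
    (heq : solves f u) (x : E2) :
    ∑ i, fderiv ℝ (fderiv ℝ f) (gradient u x) (gradient (pd u i) x) (ee i) = 0 :=
  (Finset.sum_congr rfl fun i _ =>
    (fderiv_fderiv_gradient_apply hf hu (ee i) x (ee i)).symm).trans (heq x)

theorem gradient_pd_eq_zero_of_gradient_pd_eq_zero (hf : ContDiff ℝ 2 f)
    (hpos : ∀ p q : E2, q ≠ 0 → 0 < Hess f p q) (hu : ContDiff ℝ 2 u) (heq : solves f u)
    {i : Fin 2} {x : E2} (hi : gradient (pd u i) x = 0) (j : Fin 2) :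
    gradient (pd u j) x = 0 := by
  by_contra hne
  have hji : j ≠ i := by
    rintro rfl
    exact hne hi
  have eq_i_of_ne_j (k : Fin 2) (hk : k ≠ j) : k = i := by lia
  have gradient_eq : gradient (pd u j) x = pd (pd u j) j x • ee j := by
    ext k
    rw [gradient_apply_eq_pd]
    obtain rfl | hk := eq_or_ne k j
    · simp [ee]
    · obtain rfl := eq_i_of_ne_j k hk
      rw [pd_pd_comm hu, ← gradient_apply_eq_pd, hi]
      simp [ee, hk]
  have hessian_apply_eq_zero :
      fderiv ℝ (fderiv ℝ f) (gradient u x) (gradient (pd u j) x) (ee j) = 0 := by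
    rw [← sum_hessian_gradient_pd_eq_zero hf hu heq x, Fintype.sum_eq_single j]
    intro k hk
    rw [eq_i_of_ne_j k hk, hi, map_zero, zero_apply]
  have hess_pos := hpos (gradient u x) _ hne
  rw [Hess_eq_fderiv_fderiv] at hess_pos
  nth_rewrite 2 [gradient_eq] at hess_pos
  simp [hessian_apply_eq_zero] at hess_pos

theorem basisFun_eq_ee (i : Fin 2) : EuclideanSpace.basisFun (Fin 2) ℝ i = ee i := by
  simp [ee]

theorem gradient_pd_eq_zero (hf : ContDiff ℝ 2 f) (hpos : ∀ p q : E2, q ≠ 0 → 0 < Hess f p q)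
    (hu : ContDiff ℝ 2 u) (heq : solves f u) {i : Fin 2} {ω : ℝ → ℝ} (hω : Continuous ω)
    (hωi : Integrable ω) (hgrow : ∀ x q, Hess f (gradient u x) q ≤ ω (pd u i x) * ‖q‖ ^ 2)
    (x : E2) : gradient (pd u i) x = 0 := by
  simp only [Hess_eq_fderiv_fderiv] at hpos hgrow
  have weak : IsWeakSolution volume (fun x => fderiv ℝ (fderiv ℝ f) (gradient u x)) (pd u i) :=
    isWeakSolution_fderiv_apply (EuclideanSpace.basisFun (Fin 2) ℝ) hf hu
      (by simpa only [basisFun_eq_ee] using! heq) (ee i)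
  have hessian_continuous : Continuous fun x => fderiv ℝ (fderiv ℝ f) (gradient u x) :=
    ((hf.fderiv_right (m := 1) le_rfl).continuous_fderiv one_ne_zero).comp
      (continuous_gradient (hu.of_le one_le_two))
  exact weak.gradient_eq_zero (by simp) hessian_continuous (fun x => fderiv_fderiv_comm hf _)
    (fun x => hpos _) (contDiff_fderiv_apply hu _) hω hωi hgrow x

end Plane

theorem statement1_general (f u : E2 → ℝ)
    (hf : ContDiff ℝ 2 f)
    (hpos : ∀ p q : E2, q ≠ 0 → 0 < Hess f p q)
    (hu : ContDiff ℝ 2 u) (heq : solves f u)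
    (i : Fin 2) (ω : ℝ → ℝ) (hω : Continuous ω) (hωi : Integrable ω)
    (hgrow : ∀ x q : E2, Hess f (gradient u x) q ≤ ω (pd u i x) * ‖q‖ ^ 2) :
    ∃ a b c : ℝ, ∀ x : E2, u x = a * x 0 + b * x 1 + c := by
  have gradient_pd_i := gradient_pd_eq_zero hf hpos hu heq hω hωi hgrow
  have gradient_pd (x : E2) (j : Fin 2) :=
    gradient_pd_eq_zero_of_gradient_pd_eq_zero hf hpos hu heq (gradient_pd_i x) j
  obtain ⟨p, c, hpc⟩ := exists_eq_inner_add_of_gradient_fderiv_eq_zero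
    (EuclideanSpace.basisFun (Fin 2) ℝ).toBasis hu fun x j => by
      simpa only [OrthonormalBasis.coe_toBasis, basisFun_eq_ee] using! gradient_pd x j
  refine ⟨p 0, p 1, c, fun x => ?_⟩
  simp [hpc, PiLp.inner_apply, mul_comm]

theorem statement1 (f u : E2 → ℝ)
    (hf : ContDiff ℝ 2 f)
    (hpos : ∀ p q : E2, q ≠ 0 → 0 < Hess f p q)
    (lam : ℝ) (hlam : 0 < lam)
    (hgrow : ∀ p q : E2, Hess f p q ≤ lam * (Real.log (2 + ‖p‖) / (1 + ‖p‖)) * ‖q‖ ^ 2)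
    (hu : ContDiff ℝ 2 u) (heq : solves f u)
    (m K : ℝ) (hm0 : 0 ≤ m) (hm1 : m < 1) (hK : 0 < K)
    (hbd : ∀ x : E2, |pd u 1 x| ≤ K * (|pd u 0 x| ^ m + 1)) :
    ∃ a b c : ℝ, ∀ x : E2, u x = a * x 0 + b * x 1 + c := by
  obtain ⟨ω, hω, hωi, log_div_le⟩ := exists_integrable_log_div_le hm0 hm1 hK.le
  have pd_le (x : E2) : |pd u 1 x| ≤ K * (‖gradient u x‖ ^ m + 1) := by
    refine (hbd x).trans ?_
    gcongr
    exact abs_pd_le_norm_gradient u x 0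
  refine statement1_general f u hf hpos hu heq 1 (fun t => lam * ω t)
    (by fun_prop) (hωi.const_mul lam) fun x q => (hgrow _ q).trans ?_
  gcongr
  exact log_div_le _ _ (norm_nonneg _) (pd_le x)
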